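/- Let f_1,…,f_n be MRF (submodular dichotomous) valuations on a finite item set M, and let A and B be two non-redundant allocations, extended by setting A_0 = M \ (A_1 ∪ … ∪ A_n) and B_0 = M \ (B_1 ∪ … ∪ B_n). Let S⁺ = { j ∈ {0,1,…,n} : |A_j| > |B_j| } and S⁻ = { j ∈ {0,1,…,n} : |A_j| < |B_j| }. Suppose some agent i ∈ {1,…,n} satisfies i ∈ S⁻. Then there exists a non-redundant allocation C (extended by C_0 = M \ (C_1 ∪ … ∪ C_n)) such that: |C_i| = |A_i| + 1; there is exactly one index k ∈ S⁺ with |C_k| = |A_k| − 1; |C_j| = |A_j| for every j ∉ {i,k}; and C_j ⊆ A_j for every j ∈ S⁺, with C_j = A_j unless j = k. -/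

import Mathlib

open Finset
open scoped Classical

variable {n : ℕ} {I : Type*} [DecidableEq I] [Fintype I]

/-- An allocation assigns pairwise disjoint bundles of items to the agents
(items may remain unallocated). -/
def IsAllocation (A : Fin n → Finset I) : Prop :=
  ∀ i j : Fin n, i ≠ j → Disjoint (A i) (A j)

/-- The vector of utilities of an allocation under a profile of valuations. -/
def util {α : Type*} (f : Fin n → Finset I → α) (A : Fin n → Finset I) : Fin n → α :=
  fun i => f i (A i)

/-- The entries of the vector `u`, sorted in nondecreasing order. -/
noncomputable def sortedVec {α : Type*} [LinearOrder α] (u : Fin n → α) : List α :=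
  (Finset.univ.val.map u).sort (· ≤ ·)

/-- `u` Lorenz-dominates `v`: for each `k`, the sum of the `k` smallest entries of `u`
is at least the sum of the `k` smallest entries of `v`. -/
def LorenzGE {α : Type*} [LinearOrder α] [AddCommMonoid α] (u v : Fin n → α) : Prop :=
  ∀ k : ℕ, ((sortedVec v).take k).sum ≤ ((sortedVec u).take k).sum

/-- A matroid rank function: a normalized submodular valuation with dichotomous marginals. -/
structure IsMRF (f : Finset I → ℕ) : Prop where
  empty : f ∅ = 0
  submod : ∀ S T : Finset I, S ⊆ T → ∀ a : I,
      f (insert a T) + f S ≤ f (insert a S) + f T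
  dichot : ∀ (S : Finset I) (a : I), f (insert a S) = f S ∨ f (insert a S) = f S + 1

/-- Non-redundancy: removing any item from any agent's bundle strictly decreases its value. -/
def NonRedundant (f : Fin n → Finset I → ℕ) (A : Fin n → Finset I) : Prop :=
  ∀ i : Fin n, ∀ a ∈ A i, f i ((A i).erase a) < f i (A i)

/-- A Lorenz dominating allocation. -/
def LorenzDominating (f : Fin n → Finset I → ℕ) (A : Fin n → Finset I) : Prop :=
  ∀ B : Fin n → Finset I, IsAllocation B → LorenzGE (util f A) (util f B)

/-- The σ-perturbed utilities: agent `i` gets `f i (A i) + σ(i)/n²`, where the priority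
`σ(i)` ranges over `{1,…,n}`. -/
noncomputable def pUtil (σ : Equiv.Perm (Fin n)) (f : Fin n → Finset I → ℕ)
    (A : Fin n → Finset I) : Fin n → ℝ :=
  fun i => (f i (A i) : ℝ) + (((σ i : ℕ) : ℝ) + 1) / (n : ℝ) ^ 2

/-- A σ-Lorenz dominating allocation. -/
def SigmaLorenzDom (σ : Equiv.Perm (Fin n)) (f : Fin n → Finset I → ℕ)
    (A : Fin n → Finset I) : Prop :=
  ∀ B : Fin n → Finset I, IsAllocation B → LorenzGE (pUtil σ f A) (pUtil σ f B)

/-- Restriction of a valuation to a subset `D` of the items. -/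
def restrictVal (f : Finset I → ℕ) (D : Finset I) : Finset I → ℕ := fun S => f (S ∩ D)

/-- A partition of all the items into `n` (possibly empty) bundles. -/
def IsPartition (P : Fin n → Finset I) : Prop :=
  (∀ i j : Fin n, i ≠ j → Disjoint (P i) (P j)) ∧ ∀ a : I, ∃ j, a ∈ P j

/-- An XOS valuation: the pointwise maximum of a finite nonempty family of
nonnegative additive valuations. -/
def IsXOS (f : Finset I → ℝ) : Prop :=
  ∃ (k : ℕ) (w : Fin (k + 1) → I → ℝ),
    (∀ t a, 0 ≤ w t a) ∧
    ∀ S : Finset I, f S = Finset.univ.sup' Finset.univ_nonempty (fun t => ∑ a ∈ S, w t a)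

/-- A dichotomous valuation (real-valued version). -/
def IsDichotomousR (f : Finset I → ℝ) : Prop :=
  ∀ (S : Finset I) (a : I), f (insert a S) = f S ∨ f (insert a S) = f S + 1

/-- Envy-freeness up to one good. -/
def EF1 (f : Fin n → Finset I → ℝ) (A : Fin n → Finset I) : Prop :=
  ∀ i j : Fin n, f i (A j) ≤ f i (A i) ∨ ∃ e ∈ A j, f i ((A j).erase e) ≤ f i (A i)

/-- The maximum welfare attainable by a set `S` of agents. -/
noncomputable def maxWelfare (f : Fin n → Finset I → ℕ) (S : Finset (Fin n)) : ℕ :=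
  Finset.sup (Finset.univ.filter fun B : Fin n → Finset I => IsAllocation B)
    (fun B => ∑ j ∈ S, f j (B j))

/-- An allocation extended with index `none` for the set of unallocated items. -/
def extAlloc (A : Fin n → Finset I) : Option (Fin n) → Finset I
  | none => Finset.univ \ Finset.univ.biUnion A
  | some i => A i

/-!
Identify an allocation with the map sending each item to its owner, `none` owning the unallocated
items. All its fibres are independent: in the matroid of the valuation for an agent, in the free
matroid for `none`. Since `|A_i| < |B_i|`, augmentation gives an item `b ∈ B_i \ A_i` that `i` can
take over. If the previous owner of `b` is in `S⁺`, we are done. Otherwise that owner now holds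
fewer items than under `B`, and we continue from it. Each step moves one more item to its owner
under `B`, so the process ends, and no bundle of `S⁺` changes before the last step.
-/

namespace IsMRF

variable {α : Type*} [DecidableEq α] {f : Finset α → ℕ}

lemma monotone (hf : IsMRF f) : Monotone f :=
  Finset.monotone_iff_forall_le_insert.mpr fun S a _ => by
    rcases hf.dichot S a with h | h <;> omega

lemma union_le_add_card (hf : IsMRF f) (S T : Finset α) : f (S ∪ T) ≤ f S + #T := by
  induction T using Finset.induction_on with
  | empty => simp
  | insert a T ha ih =>
    rw [union_insert, card_insert_of_notMem ha]
    rcases hf.dichot (S ∪ T) a with h | h <;> omega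

lemma le_card (hf : IsMRF f) (S : Finset α) : f S ≤ #S := by
  simpa [hf.empty] using hf.union_le_add_card ∅ S

lemma eq_card_of_subset (hf : IsMRF f) {S T : Finset α} (hT : f T = #T) (hST : S ⊆ T) :
    f S = #S := by
  have hdrop : f T ≤ f S + #(T \ S) := by
    simpa only [union_sdiff_of_subset hST] using hf.union_le_add_card S (T \ S)
  have hsplit := card_sdiff_add_card_eq_card hST
  have hle := hf.le_card S
  omega

lemma eq_card_iff_forall_erase_lt (hf : IsMRF f) {S : Finset α} :
    f S = #S ↔ ∀ a ∈ S, f (S.erase a) < f S := by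
  refine ⟨fun hS a ha => ?_, fun hS => ?_⟩
  · rw [hS]
    exact (hf.le_card _).trans_lt (card_erase_lt_of_mem ha)
  · refine Finset.induction_on' S hf.empty fun a T haS hTS haT ih => ?_
    have hsub := hf.submod T (S.erase a) (subset_erase.mpr ⟨hTS, haT⟩) a
    rw [insert_erase haS] at hsub
    have hgain := hS a haS
    have hle := hf.le_card (insert a T)
    rw [card_insert_of_notMem haT] at hle ⊢
    omega

lemma union_eq_of_forall_insert_eq (hf : IsMRF f) {S T : Finset α}
    (hT : ∀ b ∈ T, f (insert b S) = f S) : f (S ∪ T) = f S := by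
  induction T using Finset.induction_on with
  | empty => rw [union_empty]
  | insert b T _ ih =>
    rw [forall_mem_insert] at hT
    have hsub := hf.submod S (S ∪ T) subset_union_left b
    have hmono := hf.monotone (subset_union_left : S ⊆ S ∪ insert b T)
    have hstay := ih hT.2
    rw [union_insert] at hmono ⊢
    omega

lemma exists_insert_eq_card (hf : IsMRF f) {S T : Finset α} (hS : f S = #S) (hT : f T = #T)
    (hlt : #S < #T) : ∃ b ∈ T, b ∉ S ∧ f (insert b S) = #(insert b S) := by
  obtain ⟨b, hbT, hb⟩ : ∃ b ∈ T, f (insert b S) ≠ f S := by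
    by_contra! hstay
    have hunion := hf.union_eq_of_forall_insert_eq hstay
    have hmono := hf.monotone (subset_union_right : T ⊆ S ∪ T)
    omega
  have hbS : b ∉ S := fun h => hb (by rw [insert_eq_of_mem h])
  refine ⟨b, hbT, hbS, ?_⟩
  rw [(hf.dichot S b).resolve_left hb, hS, card_insert_of_notMem hbS]

/-- The matroid of which `f` is the rank function, encoded by its finite independent sets: those
with `f S = #S`. -/
protected def matroid (hf : IsMRF f) : Matroid α :=
  (IndepMatroid.ofFinset Set.univ (fun S => f S = #S) (hf.empty.trans card_empty.symm)
    (fun _ _ => hf.eq_card_of_subset) (fun _ _ => hf.exists_insert_eq_card)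
    fun _ _ => Set.subset_univ _).matroid

lemma matroid_indep_iff (hf : IsMRF f) {S : Finset α} : hf.matroid.Indep S ↔ f S = #S := by
  rw [IsMRF.matroid, IndepMatroid.matroid_Indep, IndepMatroid.ofFinset_indep]

end IsMRF

lemma hammingDist_update_lt {α : Type*} {β : α → Type*} [Fintype α] [DecidableEq α]
    [∀ a, DecidableEq (β a)] {g h : ∀ a, β a} {b : α} (hb : g b ≠ h b) :
    hammingDist (Function.update g b (h b)) h < hammingDist g h := by
  refine card_lt_card (ssubset_iff_of_subset ?_ |>.mpr ⟨b, by simpa using hb, by simp⟩)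
  intro x
  rcases eq_or_ne x b with rfl | hx
  · simp
  · simp [hx]

section Assignment

variable {α ι : Type*} [Fintype α] [DecidableEq ι]

/-- The fibre over `j` of an assignment `g` of items to owners: the items owned by `j`. -/
def bundle (g : α → ι) (j : ι) : Finset α := {x | g x = j}

lemma mem_bundle {g : α → ι} {j : ι} {x : α} : x ∈ bundle g j ↔ g x = j := by
  simp [bundle]

lemma exists_bundle_eq {P : ι → Finset α} (hP : ∀ x, ∃! j, x ∈ P j) : ∃ g, bundle g = P := by
  choose g hg hunique using hP
  refine ⟨g, funext fun j => Finset.ext fun x => ?_⟩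
  rw [mem_bundle]
  exact ⟨fun h => h ▸ hg x, fun h => (hunique x j h).symm⟩

section Update

variable [DecidableEq α] (g : α → ι) (b : α) {i j : ι}

lemma bundle_update_self (i : ι) : bundle (Function.update g b i) i = insert b (bundle g i) := by
  ext x
  by_cases hx : x = b <;> simp [mem_bundle, hx]

lemma bundle_update_of_ne (hj : j ≠ i) :
    bundle (Function.update g b i) j = (bundle g j).erase b := by
  ext x
  by_cases hx : x = b <;> simp [mem_bundle, hx, hj.symm]

lemma bundle_update_of_ne_of_ne (hji : j ≠ i) (hjb : j ≠ g b) :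
    bundle (Function.update g b i) j = bundle g j := by
  rw [bundle_update_of_ne g b hji, erase_eq_of_notMem (mt mem_bundle.mp hjb.symm)]

-- Losses stand on the left and gains on the right, so that successive moves compose by `Eq.trans`.
lemma card_bundle_update_add (i j : ι) :
    #(bundle (Function.update g b i) j) + (if j = g b then 1 else 0) =
      #(bundle g j) + if j = i then 1 else 0 := by
  rcases eq_or_ne j i with rfl | hji
  · simp only [bundle_update_self, card_insert_eq_ite, mem_bundle, eq_comm (a := j), if_true]
    split_ifs <;> rfl
  rcases eq_or_ne j (g b) with rfl | hjb
  · rw [bundle_update_of_ne g b hji, if_pos rfl, if_neg hji]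
    exact card_erase_add_one (mem_bundle.mpr rfl)
  · rw [bundle_update_of_ne_of_ne g b hji hjb, if_neg hjb, if_neg hji]

variable {g b}

lemma indep_bundle_update {M : ι → Matroid α} (hg : ∀ j, (M j).Indep (bundle g j))
    (hb : (M i).Indep (insert b (bundle g i))) (j : ι) :
    (M j).Indep (bundle (Function.update g b i) j) := by
  rcases eq_or_ne j i with rfl | hji
  · simpa only [bundle_update_self, coe_insert] using hb
  · rw [bundle_update_of_ne g b hji]
    exact (hg j).subset (coe_subset.mpr (erase_subset _ _))

end Update

theorem exists_indep_bundle_exchange (M : ι → Matroid α) {g h : α → ι}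
    (hg : ∀ j, (M j).Indep (bundle g j)) (hh : ∀ j, (M j).Indep (bundle h j)) {i : ι}
    (hi : #(bundle g i) < #(bundle h i)) :
    ∃ (c : α → ι) (k : ι), (∀ j, (M j).Indep (bundle c j)) ∧ #(bundle h k) < #(bundle g k) ∧
      (∀ j, #(bundle c j) + (if j = k then 1 else 0) =
        #(bundle g j) + if j = i then 1 else 0) ∧
      ∀ j, #(bundle h j) < #(bundle g j) → bundle c j ⊆ bundle g j := by
  induction hd : hammingDist g h using Nat.strong_induction_on generalizing g i with
  | _ d ih =>
    obtain ⟨b, hbh, hbg, hins⟩ := (hg i).augment_finset (hh i) hi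
    obtain rfl : h b = i := mem_bundle.mp hbh
    have hne : g b ≠ h b := mt mem_bundle.mpr hbg
    have hclose := hd ▸ hammingDist_update_lt hne
    have hind := indep_bundle_update hg hins
    have hcard := card_bundle_update_add g b (h b)
    have hshrink : ∀ j, j ≠ h b → bundle (Function.update g b (h b)) j ⊆ bundle g j :=
      fun j hj => bundle_update_of_ne g b hj ▸ erase_subset _ _
    have hfixed : ∀ j, j ≠ h b → j ≠ g b → bundle (Function.update g b (h b)) j = bundle g j :=
      fun j => bundle_update_of_ne_of_ne g b
    generalize Function.update g b (h b) = g' at hclose hind hcard hshrink hfixed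
    have hgain : #(bundle g' (h b)) = #(bundle g (h b)) + 1 := by
      simpa [hne.symm] using hcard (h b)
    have hloss : #(bundle g' (g b)) + 1 = #(bundle g (g b)) := by
      simpa [hne] using hcard (g b)
    have hplus_ne : ∀ j, #(bundle h j) < #(bundle g j) → j ≠ h b := by
      rintro j hj rfl
      exact hj.not_gt hi
    by_cases hplus : #(bundle h (g b)) < #(bundle g (g b))
    · exact ⟨g', g b, hind, hplus, hcard, fun j hj => hshrink j (hplus_ne j hj)⟩
    · obtain ⟨c, k, hc, hk, hcardc, hsub⟩ := ih _ hclose hind (i := g b) (by omega) rfl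
      have hkb : k ≠ h b := by
        rintro rfl
        omega
      refine ⟨c, k, hc, hk.trans_le (card_le_card (hshrink k hkb)),
        fun j => (hcardc j).trans (hcard j), fun j hj => ?_⟩
      have hjb : j ≠ g b := by
        rintro rfl
        exact hplus hj
      have hgj := hfixed j (hplus_ne j hj) hjb
      rw [← hgj] at hj ⊢
      exact hsub j hj

end Assignment

lemma IsAllocation.existsUnique_mem_extAlloc {A : Fin n → Finset I} (hA : IsAllocation A) (x : I) :
    ∃! j, x ∈ extAlloc A j := by
  by_cases hx : ∃ j, x ∈ A j
  · obtain ⟨j, hj⟩ := hx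
    refine ⟨some j, hj, ?_⟩
    rintro (_ | k) hk
    · simp only [extAlloc, mem_sdiff, mem_biUnion, mem_univ, true_and, not_exists] at hk
      exact absurd hj (hk j)
    · by_contra hkj
      exact disjoint_left.mp (hA k j fun h => hkj (congrArg some h)) hk hj
  · refine ⟨none, by simpa [extAlloc] using hx, ?_⟩
    rintro (_ | k) hk
    · rfl
    · exact absurd ⟨k, hk⟩ hx

lemma isAllocation_bundle_some {α : Type*} [Fintype α] (c : α → Option (Fin n)) :
    IsAllocation fun j => bundle c (some j) := by
  intro j k hjk
  refine disjoint_left.mpr fun x hj hk => hjk ?_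
  rw [mem_bundle] at hj hk
  exact Option.some.inj (hj.symm.trans hk)

lemma extAlloc_bundle_some (c : I → Option (Fin n)) :
    extAlloc (fun j => bundle c (some j)) = bundle c := by
  funext j
  cases j with
  | none =>
    ext x
    simp [extAlloc, mem_bundle, Option.eq_none_iff_forall_ne_some]
  | some j => rfl

/-- The matroids governing an extended allocation: that of each agent's valuation, and the free
matroid at `none`, since any set of items may be left unallocated. -/
noncomputable def extMatroid {f : Fin n → Finset I → ℕ} (hf : ∀ i, IsMRF (f i)) :
    Option (Fin n) → Matroid I
  | none => Matroid.freeOn Set.univ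
  | some j => (hf j).matroid

lemma nonRedundant_iff_indep {f : Fin n → Finset I → ℕ} (hf : ∀ i, IsMRF (f i))
    {A : Fin n → Finset I} :
    NonRedundant f A ↔ ∀ j, (extMatroid hf j).Indep (extAlloc A j) := by
  simp only [NonRedundant, Option.forall, extMatroid, extAlloc, Matroid.freeOn_indep_iff,
    Set.subset_univ, true_and, IsMRF.matroid_indep_iff, IsMRF.eq_card_iff_forall_erase_lt, hf]

theorem exists_nonRedundant_exchange {f : Fin n → Finset I → ℕ} (hf : ∀ i, IsMRF (f i))
    {A B : Fin n → Finset I} (hA : IsAllocation A) (hB : IsAllocation B)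
    (hNA : NonRedundant f A) (hNB : NonRedundant f B) {i : Option (Fin n)}
    (hi : #(extAlloc A i) < #(extAlloc B i)) :
    ∃ (C : Fin n → Finset I) (k : Option (Fin n)), IsAllocation C ∧ NonRedundant f C ∧
      #(extAlloc B k) < #(extAlloc A k) ∧
      (∀ j, #(extAlloc C j) + (if j = k then 1 else 0) =
        #(extAlloc A j) + if j = i then 1 else 0) ∧
      ∀ j, #(extAlloc B j) < #(extAlloc A j) → extAlloc C j ⊆ extAlloc A j := by
  obtain ⟨g, hg⟩ := exists_bundle_eq hA.existsUnique_mem_extAlloc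
  obtain ⟨h, hh⟩ := exists_bundle_eq hB.existsUnique_mem_extAlloc
  rw [nonRedundant_iff_indep hf, ← hg] at hNA
  rw [nonRedundant_iff_indep hf, ← hh] at hNB
  rw [← hg, ← hh] at hi ⊢
  obtain ⟨c, k, hc, hexchange⟩ := exists_indep_bundle_exchange (extMatroid hf) hNA hNB hi
  refine ⟨fun j => bundle c (some j), k, isAllocation_bundle_some c, ?_, ?_⟩
  · rwa [nonRedundant_iff_indep hf, extAlloc_bundle_some]
  · rwa [extAlloc_bundle_some]

/-- The exchange lemma: if agent `i` holds fewer items under `A` than under `B`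
(both non-redundant allocations for MRF valuations), then `A` can be modified into a
non-redundant allocation `C` in which `i` gains one item, exactly one index of
`S⁺ = {j : |A_j| > |B_j|}` loses one item, and all other bundle sizes are preserved;
moreover the bundles of indices in `S⁺` only shrink (staying equal except at `k`). -/
theorem exchange_graph_lemma
    {n : ℕ} {I : Type*} [DecidableEq I] [Fintype I]
    (f : Fin n → Finset I → ℕ) (hf : ∀ i, IsMRF (f i))
    (A B : Fin n → Finset I)
    (hA : IsAllocation A) (hB : IsAllocation B)
    (hNA : NonRedundant f A) (hNB : NonRedundant f B)
    (i : Fin n) (hi : (A i).card < (B i).card) :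
    ∃ C : Fin n → Finset I, IsAllocation C ∧ NonRedundant f C ∧
      (C i).card = (A i).card + 1 ∧
      ∃ k : Option (Fin n),
        -- `k ∈ S⁺`
        (extAlloc B k).card < (extAlloc A k).card ∧
        -- `|C_k| = |A_k| − 1`
        (extAlloc C k).card + 1 = (extAlloc A k).card ∧
        -- uniqueness of such an index in `S⁺`
        (∀ k' : Option (Fin n), (extAlloc B k').card < (extAlloc A k').card →
          (extAlloc C k').card + 1 = (extAlloc A k').card → k' = k) ∧
        -- all indices other than `i` and `k` keep their size
        (∀ j : Option (Fin n), j ≠ some i → j ≠ k →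
          (extAlloc C j).card = (extAlloc A j).card) ∧
        -- indices of `S⁺` only shrink, with equality unless `j = k`
        (∀ j : Option (Fin n), (extAlloc B j).card < (extAlloc A j).card →
          extAlloc C j ⊆ extAlloc A j) ∧
        (∀ j : Option (Fin n), (extAlloc B j).card < (extAlloc A j).card → j ≠ k →
          extAlloc C j = extAlloc A j) := by
  obtain ⟨C, k, hC, hNC, hk, hcard, hsub⟩ :=
    exists_nonRedundant_exchange hf hA hB hNA hNB (i := some i) hi
  have hki : k ≠ some i := by
    rintro rfl
    exact hk.not_gt hi
  have hfixed : ∀ j, #(extAlloc B j) < #(extAlloc A j) → j ≠ k → extAlloc C j = extAlloc A j := by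
    intro j hj hjk
    have hcardj := hcard j
    rw [if_neg hjk] at hcardj
    exact eq_of_subset_of_card_le (hsub j hj) (by omega)
  have hgain : #(C i) = #(A i) + 1 := by simpa [extAlloc, hki.symm] using hcard (some i)
  have hloss : #(extAlloc C k) + 1 = #(extAlloc A k) := by simpa [hki] using hcard k
  refine ⟨C, hC, hNC, hgain, k, hk, hloss, fun k' hk' hlossk' => ?_,
    fun j hji hjk => by simpa [hji, hjk] using hcard j, hsub, hfixed⟩
  by_contra hne
  rw [hfixed k' hk' hne] at hlossk'
  omega
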